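/- arXiv:2203.06005 — 2 statements merged into one kernel-verified Lean document; each statement's English description precedes it below -/
import Mathlib

section
/- Let R be a right semiartinian ring with right socle sequence (S_α | α ≤ σ+1), and let M be a right R-module. Then the following are equivalent: (1) M is weakly R-projective; (2) for each α ≤ σ, each submodule K with S_α ⊆ K ⊆ S_{α+1}, and each homomorphism f : M → S_{α+1}/K with finitely generated image, there exists g : M → S_{α+1} such that f = π_K ∘ g, where π_K : S_{α+1} → S_{α+1}/K is the canonical projection. -/
/-!
Write a projection `S_{α+1} → S_{α+1}/K` as `L_α → S_{α+1}/K` after the layer epimorphism `π_α`.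
The layer `L_α` embeds in `Soc(R/S_α)`, so it is semisimple and `L_α → S_{α+1}/K` has a section `s`.
If `f : M → S_{α+1}/K` has finitely generated image, then so has `s ∘ f : M → L_α`, and every lift
of `s ∘ f` along `π_α` lifts `f` as well. For `α = 0` the epimorphism `π_0` is an isomorphism, so
weak projectivity need not say anything about it.
-/

universe u

open Submodule Function

/-- The socle of a module: the supremum of all simple submodules. -/
def moduleSocle (R : Type*) (M : Type*) [Ring R] [AddCommGroup M] [Module R M] :
    Submodule R M :=
  sSup {W : Submodule R M | IsSimpleModule R ↥W}

/-- A ring is right semiartinian if every nonzero quotient of the right module `R_R`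
has a nonzero socle. -/
def IsRightSemiartinian (R : Type u) [Ring R] : Prop :=
  ∀ I : Submodule Rᵐᵒᵖ R, I ≠ ⊤ → moduleSocle Rᵐᵒᵖ (R ⧸ I) ≠ ⊥

/-- The right socle sequence of a ring: `S_0 = 0`, `S_{α+1}/S_α = Soc(R/S_α)`,
and unions at limits. -/
noncomputable def socleSeq (R : Type u) [Ring R] : Ordinal.{u} → Submodule Rᵐᵒᵖ R :=
  fun o => Ordinal.limitRecOn o ⊥
    (fun _ S => Submodule.comap S.mkQ (moduleSocle Rᵐᵒᵖ (R ⧸ S)))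
    (fun o _ ih => ⨆ (β : Ordinal.{u}) (h : β < o), ih β h)

/-- `S_α`, viewed as a submodule of `S_{α+1}`; the kernel of the `α`-th layer
epimorphism `π_α : S_{α+1} → S_{α+1}/S_α`. -/
noncomputable def layerKer (R : Type u) [Ring R] (α : Ordinal.{u}) :
    Submodule Rᵐᵒᵖ ↥(socleSeq R (α + 1)) :=
  (socleSeq R α).comap (socleSeq R (α + 1)).subtype

/-- The `α`-th layer `L_α = S_{α+1}/S_α` of a ring. -/
noncomputable abbrev Layer (R : Type u) [Ring R] (α : Ordinal.{u}) :=
  ↥(socleSeq R (α + 1)) ⧸ layerKer R α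

/-- A module `M` is weakly `R`-projective if for each `0 < α ≤ σ`, every homomorphism
`f : M → L_α` with finitely generated image factors through the `α`-th layer
epimorphism `π_α : S_{α+1} → L_α`. -/
def WeaklyRProjective (R : Type u) [Ring R] (σ : Ordinal.{u})
    (M : Type u) [AddCommGroup M] [Module Rᵐᵒᵖ M] : Prop :=
  ∀ α : Ordinal.{u}, 0 < α → α ≤ σ →
    ∀ f : M →ₗ[Rᵐᵒᵖ] Layer R α, (LinearMap.range f).FG →
      ∃ g : M →ₗ[Rᵐᵒᵖ] ↥(socleSeq R (α + 1)), (layerKer R α).mkQ ∘ₗ g = f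

/-- A ring is von Neumann regular if each `r` admits `s` with `r * s * r = r`. -/
def IsVNRegular (R : Type u) [Ring R] : Prop :=
  ∀ r : R, ∃ s : R, r * s * r = r

/-- The annihilator of a right `R`-module, as a submodule of the right module `R_R`. -/
def rightAnnihilator (R : Type u) [Ring R] (M : Type u) [AddCommGroup M]
    [Module Rᵐᵒᵖ M] : Submodule Rᵐᵒᵖ R where
  carrier := {r : R | ∀ m : M, MulOpposite.op r • m = 0}
  add_mem' := by
    intro a b ha hb m
    rw [MulOpposite.op_add, add_smul, ha m, hb m, add_zero]
  zero_mem' := by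
    intro m
    rw [MulOpposite.op_zero, zero_smul]
  smul_mem' := by
    intro c r hr m
    have h : MulOpposite.op (c • r) = c * MulOpposite.op r := by
      rw [MulOpposite.smul_eq_mul_unop, MulOpposite.op_mul, MulOpposite.op_unop]
    rw [h, mul_smul, hr m, smul_zero]

/-- A ring has (right) primitive factors artinian if, for each right primitive
(two-sided) ideal `P`, i.e. the annihilator of a simple right module, the factor
`R/P` is (right) artinian. -/
def HasPFA (R : Type u) [Ring R] : Prop :=
  ∀ (M : Type u) [AddCommGroup M] [Module Rᵐᵒᵖ M], IsSimpleModule Rᵐᵒᵖ M →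
    IsArtinian Rᵐᵒᵖ (R ⧸ rightAnnihilator R M)

section Lifting

variable {R M P Q N : Type*} [Ring R] [AddCommGroup M] [Module R M] [AddCommGroup P] [Module R P]
  [AddCommGroup Q] [Module R Q] [AddCommGroup N] [Module R N]

variable (M) in
/-- Projectivity of `M` relative to `p`, restricted to maps with finitely generated image: each such
map from `M` to the target of `p` factors through `p`. Weak `R`-projectivity and its strong form
both require this property along a family of projections. -/
def HasFGLifts (p : P →ₗ[R] Q) : Prop :=
  ∀ f : M →ₗ[R] Q, (LinearMap.range f).FG → ∃ g : M →ₗ[R] P, p ∘ₗ g = f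

namespace HasFGLifts

theorem of_bijective {p : P →ₗ[R] Q} (hp : Bijective p) : HasFGLifts M p := fun f _ =>
  let e := LinearEquiv.ofBijective p hp
  ⟨e.symm ∘ₗ f, LinearMap.ext fun x => e.apply_symm_apply (f x)⟩

theorem comp_of_isSemisimpleModule [IsSemisimpleModule R Q] {p : P →ₗ[R] Q} {q : Q →ₗ[R] N}
    (hp : HasFGLifts M p) (hq : Surjective q) : HasFGLifts M (q ∘ₗ p) := by
  intro f hf
  obtain ⟨s, hs⟩ : ∃ s : N →ₗ[R] Q, q ∘ₗ s = LinearMap.id :=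
    IsSemisimpleModule.lifting_property q hq LinearMap.id
  have hsf : (LinearMap.range (s ∘ₗ f)).FG := by
    rw [LinearMap.range_comp]
    exact hf.map s
  obtain ⟨g, hg⟩ := hp (s ∘ₗ f) hsf
  refine ⟨g, ?_⟩
  calc (q ∘ₗ p) ∘ₗ g = q ∘ₗ (s ∘ₗ f) := by rw [LinearMap.comp_assoc, hg]
    _ = f := by rw [← LinearMap.comp_assoc, hs, LinearMap.id_comp]

theorem mkQ_of_le {A B : Submodule R P} [IsSemisimpleModule R (P ⧸ A)]
    (hA : HasFGLifts M A.mkQ) (hAB : A ≤ B) : HasFGLifts M B.mkQ := by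
  rw [← factor_comp_mk hAB]
  exact hA.comp_of_isSemisimpleModule (factor_surjective hAB)

end HasFGLifts

end Lifting

section Semisimple

variable {R M : Type*} [Ring R] [AddCommGroup M] [Module R M]

instance isSemisimpleModule_moduleSocle : IsSemisimpleModule R (moduleSocle R M) := by
  rw [moduleSocle, sSup_eq_iSup]
  refine isSemisimpleModule_biSup_of_isSemisimpleModule_submodule fun W hW => ?_
  have : IsSimpleModule R W := hW
  infer_instance

theorem isSemisimpleModule_quotient_submoduleOf (A B : Submodule R M)
    [IsSemisimpleModule R (B.map A.mkQ)] : IsSemisimpleModule R (B ⧸ A.submoduleOf B) := by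
  let φ : B →ₗ[R] B.map A.mkQ := A.mkQ.submoduleMap B
  have ker_φ : LinearMap.ker φ = A.submoduleOf B := by
    ext x
    simp [φ, submoduleOf, Subtype.ext_iff]
  rw [← ker_φ]
  exact .of_injective _ (LinearMap.ker_eq_bot.mp (ker_liftQ_eq_bot' _ φ rfl))

end Semisimple

section SocleSequence

variable (R : Type u) [Ring R] (α : Ordinal.{u})

theorem socleSeq_zero : socleSeq R 0 = ⊥ :=
  Ordinal.limitRecOn_zero ..

theorem socleSeq_add_one :
    socleSeq R (α + 1) = (moduleSocle Rᵐᵒᵖ (R ⧸ socleSeq R α)).comap (socleSeq R α).mkQ :=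
  Ordinal.limitRecOn_add_one ..

theorem map_mkQ_socleSeq_add_one :
    (socleSeq R (α + 1)).map (socleSeq R α).mkQ = moduleSocle Rᵐᵒᵖ (R ⧸ socleSeq R α) := by
  rw [socleSeq_add_one, map_comap_eq_of_surjective (mkQ_surjective _)]

theorem layerKer_zero : layerKer R 0 = ⊥ := by
  rw [layerKer, socleSeq_zero, comap_bot, ker_subtype]

instance isSemisimpleModule_layer : IsSemisimpleModule Rᵐᵒᵖ (Layer R α) := by
  have : IsSemisimpleModule Rᵐᵒᵖ ((socleSeq R (α + 1)).map (socleSeq R α).mkQ) := by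
    rw [map_mkQ_socleSeq_add_one]
    infer_instance
  exact isSemisimpleModule_quotient_submoduleOf (socleSeq R α) (socleSeq R (α + 1))

theorem bijective_mkQ_layerKer_zero : Bijective (layerKer R 0).mkQ :=
  ⟨by rw [← LinearMap.ker_eq_bot, ker_mkQ, layerKer_zero], mkQ_surjective _⟩

end SocleSequence

theorem WeaklyRProjective.hasFGLifts_mkQ_layerKer {R : Type u} [Ring R] {σ : Ordinal.{u}}
    {M : Type u} [AddCommGroup M] [Module Rᵐᵒᵖ M] (hM : WeaklyRProjective R σ M)
    {α : Ordinal.{u}} (hα : α ≤ σ) : HasFGLifts M (layerKer R α).mkQ := by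
  rcases eq_zero_or_pos α with rfl | hpos
  · exact .of_bijective (bijective_mkQ_layerKer_zero R)
  · exact hM α hpos hα

theorem weaklyRProjective_iff_strong_general (R : Type u) [Ring R] (σ : Ordinal.{u})
    (M : Type u) [AddCommGroup M] [Module Rᵐᵒᵖ M] :
    WeaklyRProjective R σ M ↔
      ∀ α : Ordinal.{u}, α ≤ σ →
        ∀ K : Submodule Rᵐᵒᵖ ↥(socleSeq R (α + 1)), layerKer R α ≤ K →
          ∀ f : M →ₗ[Rᵐᵒᵖ] (↥(socleSeq R (α + 1)) ⧸ K), (LinearMap.range f).FG →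
            ∃ g : M →ₗ[Rᵐᵒᵖ] ↥(socleSeq R (α + 1)), K.mkQ ∘ₗ g = f :=
  ⟨fun hM _ hα _ hK => (hM.hasFGLifts_mkQ_layerKer hα).mkQ_of_le hK,
    fun h α _ hα => h α hα _ le_rfl⟩

/-- Lemma 4 of the paper: over a right semiartinian ring,
weak `R`-projectivity is equivalent to its stronger form involving all intermediate
submodules `S_α ⊆ K ⊆ S_{α+1}`. -/
theorem weaklyRProjective_iff_strong (R : Type u) [Ring R]
    (hsa : IsRightSemiartinian R)
    (σ : Ordinal.{u}) (hσ : IsLeast {o : Ordinal.{u} | socleSeq R o = ⊤} (σ + 1))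
    (M : Type u) [AddCommGroup M] [Module Rᵐᵒᵖ M] :
    WeaklyRProjective R σ M ↔
      ∀ α : Ordinal.{u}, α ≤ σ →
        ∀ K : Submodule Rᵐᵒᵖ ↥(socleSeq R (α + 1)), layerKer R α ≤ K →
          ∀ f : M →ₗ[Rᵐᵒᵖ] (↥(socleSeq R (α + 1)) ⧸ K), (LinearMap.range f).FG →
            ∃ g : M →ₗ[Rᵐᵒᵖ] ↥(socleSeq R (α + 1)), K.mkQ ∘ₗ g = f :=
  weaklyRProjective_iff_strong_general R σ M
end

section
/- Let R be a semiartinian von Neumann regular ring with primitive factors artinian. Then the class of all weakly R-projective right R-modules is closed under submodules: every submodule of a weakly R-projective module is weakly R-projective. -/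
universe u

open Submodule Function

/-!
A homomorphism `f : N → L_α` with finitely generated image has semisimple image, since `L_α` is the
socle of `R/S_α`. Over a regular ring with primitive factors artinian, finitely generated semisimple
modules are injective, so `f` extends to `M` without enlarging its image; a lift of the extension
along `π_α` restricts to a lift of `f`.

Injectivity of a simple module `S` is checked by Baer's criterion. Over a regular ring a
homomorphism `I → S` from a one-sided ideal kills `I ∩ Ann S`, so it factors through
`I / (I ∩ Ann S)`, a submodule of `R / Ann S`. The latter is artinian and embeds in a power of `S`,
so it has zero radical and is semisimple, and the homomorphism extends.
-/

section Injectivity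

universe v

variable {A : Type*} [Ring A]

section Annihilator

variable {S : Type*} [AddCommGroup S] [Module A S]

theorem jacobson_quotient_annihilator_eq_bot (hS : Module.jacobson A S = ⊥) :
    Module.jacobson A (A ⧸ Module.annihilator A S) = ⊥ := by
  let evaluation : A →ₗ[A] S → S := LinearMap.pi (LinearMap.toSpanSingleton A S)
  have ker_evaluation : Module.annihilator A S = LinearMap.ker evaluation := by
    ext a
    simp only [Module.mem_annihilator, LinearMap.mem_ker, funext_iff, evaluation,
      LinearMap.pi_apply, LinearMap.toSpanSingleton_apply, Pi.zero_apply]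
  exact Module.jacobson_eq_bot_of_injective _
    (LinearMap.ker_eq_bot.mp (ker_liftQ_eq_bot' _ evaluation ker_evaluation))
    (Module.jacobson_pi_eq_bot _ _ fun _ ↦ hS)

theorem isSemisimpleModule_quotient_annihilator [IsSemisimpleModule A S]
    [IsArtinian A (A ⧸ Module.annihilator A S)] :
    IsSemisimpleModule A (A ⧸ Module.annihilator A S) :=
  (IsArtinian.isSemisimpleModule_iff_jacobson _ _).mpr
    (jacobson_quotient_annihilator_eq_bot (IsSemisimpleModule.jacobson_eq_bot A S))

theorem IsVNRegular.map_eq_zero_of_mem_annihilator (hA : IsVNRegular A) {I : Ideal A}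
    (g : I →ₗ[A] S) {x : I} (hx : (x : A) ∈ Module.annihilator A S) : g x = 0 := by
  obtain ⟨b, hb⟩ := hA x
  have x_eq : x = (x * b : A) • x := Subtype.ext hb.symm
  calc g x = (x : A) • b • g x := by rw [← mul_smul, ← map_smul, ← x_eq]
    _ = 0 := Module.mem_annihilator.mp hx _

theorem IsVNRegular.baer_of_isSemisimpleModule_quotient_annihilator (hA : IsVNRegular A)
    [IsSemisimpleModule A (A ⧸ Module.annihilator A S)] : Module.Baer A S := by
  intro I g
  let J : Submodule A I := comap I.subtype (Module.annihilator A S)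
  let inclusion : (I ⧸ J) →ₗ[A] A ⧸ Module.annihilator A S := mapQ _ _ I.subtype le_rfl
  have inclusion_injective : Injective inclusion := by
    rw [← LinearMap.ker_eq_bot, ker_mapQ, mkQ_map_self]
  let gBar : (I ⧸ J) →ₗ[A] S := J.liftQ g fun _ hx ↦ hA.map_eq_zero_of_mem_annihilator g hx
  obtain ⟨h, h_inclusion⟩ :=
    IsSemisimpleModule.extension_property inclusion inclusion_injective gBar
  exact ⟨h ∘ₗ mkQ _, fun x hx ↦ LinearMap.congr_fun h_inclusion (J.mkQ ⟨x, hx⟩)⟩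

end Annihilator

theorem injective_of_forall_simple_submodule_injective (X : Type v) [Small.{v} A]
    [AddCommGroup X] [Module A X] [IsSemisimpleModule A X] [Module.Finite A X]
    (hX : ∀ S : Submodule A X, IsSimpleModule A S → Module.Injective A S) :
    Module.Injective A X := by
  obtain ⟨n, S, e, hS⟩ := IsSemisimpleModule.exists_linearEquiv_fin_dfinsupp A X
  have (i : Fin n) : Module.Injective A (S i) := hX (S i) (hS i)
  let toPi := e.trans (DFinsupp.linearEquivFunOnFintype (R := A) (M := fun i ↦ S i))
  exact ((Module.Baer.of_injective inferInstance).of_equiv toPi.symm).injective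

theorem exists_extension_range_eq {M L : Type*} [AddCommGroup M] [Module A M] [AddCommGroup L]
    [Module A L] {N : Submodule A M} (f : N →ₗ[A] L) (hf : Module.Baer A (LinearMap.range f)) :
    ∃ F : M →ₗ[A] L, F ∘ₗ N.subtype = f ∧ LinearMap.range F = LinearMap.range f := by
  obtain ⟨h, h_comp⟩ := hf.extension_property N.subtype N.injective_subtype f.rangeRestrict
  have F_comp : ((LinearMap.range f).subtype ∘ₗ h) ∘ₗ N.subtype = f := by
    rw [LinearMap.comp_assoc, h_comp, LinearMap.rangeRestrict, LinearMap.subtype_comp_codRestrict]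
  refine ⟨(LinearMap.range f).subtype ∘ₗ h, F_comp, le_antisymm ?_ ?_⟩
  · rintro _ ⟨m, rfl⟩
    exact (h m).2
  · conv_lhs => rw [← F_comp]
    exact LinearMap.range_comp_le_range _ _

end Injectivity

section RightModules

variable {R : Type u} [Ring R]

theorem IsVNRegular.mulOpposite (hR : IsVNRegular R) : IsVNRegular Rᵐᵒᵖ := fun a ↦ by
  obtain ⟨s, hs⟩ := hR a.unop
  exact ⟨MulOpposite.op s, MulOpposite.unop_injective (by simpa [mul_assoc] using hs)⟩

theorem comap_toSpanSingleton_one_rightAnnihilator (S : Type u) [AddCommGroup S] [Module Rᵐᵒᵖ S] :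
    (rightAnnihilator R S).comap (LinearMap.toSpanSingleton Rᵐᵒᵖ R 1) =
      Module.annihilator Rᵐᵒᵖ S := by
  ext a
  rw [mem_comap, LinearMap.toSpanSingleton_apply, MulOpposite.smul_eq_mul_unop, one_mul,
    Module.mem_annihilator]
  rfl

theorem HasPFA.isArtinian_quotient_annihilator (hR : HasPFA R) (S : Type u) [AddCommGroup S]
    [Module Rᵐᵒᵖ S] [hS : IsSimpleModule Rᵐᵒᵖ S] :
    IsArtinian Rᵐᵒᵖ (Rᵐᵒᵖ ⧸ Module.annihilator Rᵐᵒᵖ S) := by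
  have := hR S hS
  have comap_eq := comap_toSpanSingleton_one_rightAnnihilator (R := R) S
  refine isArtinian_of_injective
    (mapQ _ (rightAnnihilator R S) (LinearMap.toSpanSingleton Rᵐᵒᵖ R 1) comap_eq.ge) ?_
  rw [← LinearMap.ker_eq_bot, ker_mapQ, comap_eq, mkQ_map_self]

theorem IsVNRegular.injective_of_finite_of_isSemisimpleModule (hvnr : IsVNRegular R)
    (hpfa : HasPFA R) (X : Type u) [AddCommGroup X] [Module Rᵐᵒᵖ X] [IsSemisimpleModule Rᵐᵒᵖ X]
    [Module.Finite Rᵐᵒᵖ X] : Module.Injective Rᵐᵒᵖ X := by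
  refine injective_of_forall_simple_submodule_injective X fun S _ ↦ ?_
  have := hpfa.isArtinian_quotient_annihilator S
  have := isSemisimpleModule_quotient_annihilator (A := Rᵐᵒᵖ) (S := S)
  exact hvnr.mulOpposite.baer_of_isSemisimpleModule_quotient_annihilator.injective

end RightModules

section SocleLayers

theorem isSemisimpleModule_moduleSocle_s3 (A M : Type*) [Ring A] [AddCommGroup M] [Module A M] :
    IsSemisimpleModule A (moduleSocle A M) := by
  rw [moduleSocle, sSup_eq_iSup]
  refine isSemisimpleModule_biSup_of_isSemisimpleModule_submodule fun W hW ↦ ?_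
  have : IsSimpleModule A W := hW
  infer_instance

variable (R : Type u) [Ring R] (α : Ordinal.{u})

theorem isSemisimpleModule_layer_s3 : IsSemisimpleModule Rᵐᵒᵖ (Layer R α) := by
  have := isSemisimpleModule_moduleSocle_s3 Rᵐᵒᵖ (R ⧸ socleSeq R α)
  let toSocle : socleSeq R (α + 1) →ₗ[Rᵐᵒᵖ] moduleSocle Rᵐᵒᵖ (R ⧸ socleSeq R α) :=
    ((socleSeq R α).mkQ ∘ₗ (socleSeq R (α + 1)).subtype).codRestrict _
      fun x ↦ (socleSeq_add_one R α).le x.2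
  have ker_toSocle : layerKer R α = LinearMap.ker toSocle := by
    rw [LinearMap.ker_codRestrict, LinearMap.ker_comp, ker_mkQ, layerKer]
  exact .of_injective _ (LinearMap.ker_eq_bot.mp (ker_liftQ_eq_bot' _ toSocle ker_toSocle))

end SocleLayers

theorem weaklyRProjective_submodule_general (R : Type u) [Ring R]
    (hvnr : IsVNRegular R) (hpfa : HasPFA R) (σ : Ordinal.{u})
    (M : Type u) [AddCommGroup M] [Module Rᵐᵒᵖ M]
    (hM : WeaklyRProjective R σ M) (N : Submodule Rᵐᵒᵖ M) :
    WeaklyRProjective R σ ↥N := by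
  intro α α_pos α_le f range_fg
  have := isSemisimpleModule_layer_s3 R α
  have : Module.Finite Rᵐᵒᵖ (LinearMap.range f) := .of_fg range_fg
  have range_injective := hvnr.injective_of_finite_of_isSemisimpleModule hpfa (LinearMap.range f)
  obtain ⟨F, F_comp, range_F⟩ := exists_extension_range_eq f (.of_injective range_injective)
  obtain ⟨g, hg⟩ := hM α α_pos α_le F (range_F ▸ range_fg)
  exact ⟨g ∘ₗ N.subtype, by rw [← LinearMap.comp_assoc, hg, F_comp]⟩

/-- Lemma 8(1) of the paper: over a semiartinian von Neumann regular
ring with primitive factors artinian, the class of weakly `R`-projective modules is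
closed under submodules. -/
theorem weaklyRProjective_submodule (R : Type u) [Ring R]
    (hsa : IsRightSemiartinian R) (hvnr : IsVNRegular R) (hpfa : HasPFA R)
    (σ : Ordinal.{u}) (hσ : IsLeast {o : Ordinal.{u} | socleSeq R o = ⊤} (σ + 1))
    (M : Type u) [AddCommGroup M] [Module Rᵐᵒᵖ M]
    (hM : WeaklyRProjective R σ M) (N : Submodule Rᵐᵒᵖ M) :
    WeaklyRProjective R σ ↥N :=
  weaklyRProjective_submodule_general R hvnr hpfa σ M hM N
end
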